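/- One-step linearized potential bound for stochastic wide-range Hedge: let w : ℐ → [0,∞) be nonnegative weights, η > 0, L̄ > 0, p ∈ Δ(𝒜), and for each b ∈ B^s ∪ B^e let S_b ≥ 0 and let ℓ̃_b : 𝒜 → [0,∞) satisfy S_b·ℓ̃_b(a) ≤ L̄ for every a ∈ 𝒜. Then, with c = (1 − exp(−η·L̄))/L̄, ∑_{(b,ψ)∈ℐ} w(b,ψ)·exp(η·S_b·(exp(−η·L̄)·⟨p, ℓ̃_b⟩ − ⟨ψ∘p, ℓ̃_b⟩)) ≤ ∑_{(b,ψ)∈ℐ} w(b,ψ)·(1 + c·S_b·⟨p, ℓ̃_b⟩ − c·S_b·⟨ψ∘p, ℓ̃_b⟩). -/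

import Mathlib

/-!
The inequality holds term by term. Put `x = S_b ⟨p, ℓ̃_b⟩`, `y = S_b ⟨ψ∘p, ℓ̃_b⟩`, both in `[0, L̄]`
because `p` and `ψ∘p` are probability vectors, and let `β = exp (-η L̄)`, `c = (1 - β) / L̄`.
On `[0, L̄]` the convex function `t ↦ exp (θ t)` lies below its chord. For `θ = -η` at `y` this is
`exp (-η y) ≤ 1 - c y`; for `θ = η` at the contracted point `β x` it is `exp (η β x) ≤ 1 + c x`,
since `β (exp (η L̄) - 1) = 1 - β`. The product of the two right-hand sides is
`1 + c x - c y - c² x y`, and the last term is nonpositive.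
-/

open Finset

/-- Pushforward of a vector `p` on `Fin A` under a map `ψ : Fin A → Fin A`:
`(ψ∘p)(a) = ∑_{a' : ψ(a') = a} p(a')`. -/
def pushf {A : ℕ} (ψ : Fin A → Fin A) (p : Fin A → ℝ) : Fin A → ℝ :=
  fun a => ∑ a' ∈ Finset.univ.filter (fun a' => ψ a' = a), p a'

/-- Standard inner product on `ℝ^A`. -/
def ip {A : ℕ} (p ℓ : Fin A → ℝ) : ℝ := ∑ a, p a * ℓ a

/-- The set `Ψ^e` of external (constant) modifications on `Fin A`. -/
def PsiE (A : ℕ) : Finset (Fin A → Fin A) :=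
  Finset.univ.image fun a => Function.const (Fin A) a

section Scalar

variable {θ η L x y : ℝ}

lemma exp_mul_le_chord (hL : 0 < L) (hx : x ∈ Set.Icc 0 L) :
    Real.exp (θ * x) ≤ 1 + (Real.exp (θ * L) - 1) / L * x := by
  have hconv := convexOn_exp.2 (Set.mem_univ 0) (Set.mem_univ (θ * L))
    (sub_nonneg.2 ((div_le_one hL).2 hx.2)) (div_nonneg hx.1 hL.le) (sub_add_cancel 1 (x / L))
  have hpoint : (1 - x / L) • 0 + (x / L) • (θ * L) = θ * x := by
    simp only [smul_eq_mul]
    field_simp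
    ring
  calc Real.exp (θ * x)
      ≤ (1 - x / L) • Real.exp 0 + (x / L) • Real.exp (θ * L) := hpoint ▸ hconv
    _ = 1 + (Real.exp (θ * L) - 1) / L * x := by
      simp only [smul_eq_mul, Real.exp_zero]
      ring

lemma exp_mul_exp_neg_mul_le (hη : 0 ≤ η) (hL : 0 < L) (hx : x ∈ Set.Icc 0 L) :
    Real.exp (η * (Real.exp (-η * L) * x)) ≤ 1 + (1 - Real.exp (-η * L)) / L * x := by
  have hle_one : Real.exp (-η * L) ≤ 1 :=
    Real.exp_le_one_iff.2 (mul_nonpos_of_nonpos_of_nonneg (neg_nonpos.2 hη) hL.le)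
  have hmem : Real.exp (-η * L) * x ∈ Set.Icc 0 L :=
    ⟨mul_nonneg (Real.exp_pos _).le hx.1, (mul_le_of_le_one_left hx.1 hle_one).trans hx.2⟩
  have hcancel : Real.exp (-η * L) * Real.exp (η * L) = 1 := by
    rw [← Real.exp_add, neg_mul, neg_add_cancel, Real.exp_zero]
  calc Real.exp (η * (Real.exp (-η * L) * x))
      ≤ 1 + (Real.exp (η * L) - 1) / L * (Real.exp (-η * L) * x) := exp_mul_le_chord hL hmem
    _ = 1 + (1 - Real.exp (-η * L)) / L * x := by linear_combination x / L * hcancel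

lemma exp_mul_exp_neg_mul_sub_le (hη : 0 ≤ η) (hL : 0 < L) (hx : x ∈ Set.Icc 0 L)
    (hy : y ∈ Set.Icc 0 L) :
    Real.exp (η * (Real.exp (-η * L) * x - y)) ≤
      1 + (1 - Real.exp (-η * L)) / L * x - (1 - Real.exp (-η * L)) / L * y := by
  have hgain := exp_mul_exp_neg_mul_le hη hL hx
  have hloss : Real.exp (-η * y) ≤ 1 - (1 - Real.exp (-η * L)) / L * y :=
    (exp_mul_le_chord hL hy).trans_eq (by ring)
  have hsplit : Real.exp (η * (Real.exp (-η * L) * x - y)) =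
      Real.exp (η * (Real.exp (-η * L) * x)) * Real.exp (-η * y) := by
    rw [← Real.exp_add]
    ring_nf
  rw [hsplit]
  set c := (1 - Real.exp (-η * L)) / L
  calc Real.exp (η * (Real.exp (-η * L) * x)) * Real.exp (-η * y)
      ≤ (1 + c * x) * (1 - c * y) :=
        mul_le_mul hgain hloss (Real.exp_pos _).le ((Real.exp_pos _).le.trans hgain)
    _ = 1 + c * x - c * y - c ^ 2 * (x * y) := by ring
    _ ≤ 1 + c * x - c * y :=
        sub_le_self _ (mul_nonneg (sq_nonneg c) (mul_nonneg hx.1 hy.1))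

end Scalar

lemma dotProduct_mem_of_mem_stdSimplex {α R : Type*} [Fintype α] [Field R] [LinearOrder R]
    [IsStrictOrderedRing R] {K : Set R} {p f : α → R} (hK : Convex R K)
    (hp : p ∈ stdSimplex R α) (hf : ∀ a, f a ∈ K) : p ⬝ᵥ f ∈ K :=
  hK.sum_mem (fun a _ => hp.1 a) hp.2 fun a _ => hf a

lemma pushf_mem_stdSimplex {A : ℕ} {p : Fin A → ℝ} (ψ : Fin A → Fin A)
    (hp : p ∈ stdSimplex ℝ (Fin A)) : pushf ψ p ∈ stdSimplex ℝ (Fin A) :=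
  ⟨fun _ => sum_nonneg fun a _ => hp.1 a, (sum_fiberwise univ ψ p).trans hp.2⟩

theorem stmt3_general {ι α : Type*} [Fintype α] (s : Finset ι) {w : ι → ℝ}
    (hw : ∀ i ∈ s, 0 ≤ w i) {η L : ℝ} (hη : 0 ≤ η) (hL : 0 < L) {p : α → ℝ} {q : ι → α → ℝ}
    (hp : p ∈ stdSimplex ℝ α) (hq : ∀ i ∈ s, q i ∈ stdSimplex ℝ α) {S : ι → ℝ} {ℓ : ι → α → ℝ}
    (hℓ : ∀ i ∈ s, ∀ a, S i * ℓ i a ∈ Set.Icc 0 L) :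
    ∑ i ∈ s, w i * Real.exp (η * S i * (Real.exp (-η * L) * (p ⬝ᵥ ℓ i) - q i ⬝ᵥ ℓ i)) ≤
      ∑ i ∈ s, w i * (1 + (1 - Real.exp (-η * L)) / L * S i * (p ⬝ᵥ ℓ i)
        - (1 - Real.exp (-η * L)) / L * S i * (q i ⬝ᵥ ℓ i)) := by
  refine sum_le_sum fun i hi => mul_le_mul_of_nonneg_left ?_ (hw i hi)
  have hmem {r : α → ℝ} (hr : r ∈ stdSimplex ℝ α) : S i * (r ⬝ᵥ ℓ i) ∈ Set.Icc 0 L := by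
    rw [← smul_eq_mul, ← dotProduct_smul]
    exact dotProduct_mem_of_mem_stdSimplex (convex_Icc 0 L) hr (hℓ i hi)
  calc Real.exp (η * S i * (Real.exp (-η * L) * (p ⬝ᵥ ℓ i) - q i ⬝ᵥ ℓ i))
      = Real.exp (η * (Real.exp (-η * L) * (S i * (p ⬝ᵥ ℓ i)) - S i * (q i ⬝ᵥ ℓ i))) := by
        ring_nf
    _ ≤ 1 + (1 - Real.exp (-η * L)) / L * (S i * (p ⬝ᵥ ℓ i))
          - (1 - Real.exp (-η * L)) / L * (S i * (q i ⬝ᵥ ℓ i)) :=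
        exp_mul_exp_neg_mul_sub_le hη hL (hmem hp) (hmem (hq i hi))
    _ = _ := by simp only [mul_assoc]

/-- One-step linearized potential bound for stochastic wide-range Hedge, with
`c = (1 − exp(−η·Lbar))/Lbar`. -/
theorem stmt3
    (A : ℕ) (hA : 1 ≤ A)
    (B : Type) [Fintype B] [DecidableEq B]
    (Bs Be : Finset B) (hdisj : Disjoint Bs Be)
    (hBs : Bs.Nonempty) (hBe : Be.Nonempty)
    (ℐ : Finset (B × (Fin A → Fin A)))
    (hℐ : ℐ = Bs ×ˢ (Finset.univ : Finset (Fin A → Fin A)) ∪ Be ×ˢ PsiE A)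
    (w : B × (Fin A → Fin A) → ℝ) (hw : ∀ bψ ∈ ℐ, 0 ≤ w bψ)
    (η Lbar : ℝ) (hη : 0 < η) (hL : 0 < Lbar)
    (p : Fin A → ℝ) (hp : (∀ a, 0 ≤ p a) ∧ ∑ a, p a = 1)
    (S : B → ℝ) (hS : ∀ b ∈ Bs ∪ Be, 0 ≤ S b)
    (ℓt : B → Fin A → ℝ)
    (hℓt : ∀ b ∈ Bs ∪ Be, ∀ a, 0 ≤ ℓt b a ∧ S b * ℓt b a ≤ Lbar) :
    ∑ bψ ∈ ℐ, w bψ *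
        Real.exp (η * S bψ.1 *
          (Real.exp (-η * Lbar) * ip p (ℓt bψ.1) - ip (pushf bψ.2 p) (ℓt bψ.1)))
      ≤ ∑ bψ ∈ ℐ, w bψ *
          (1 + (1 - Real.exp (-η * Lbar)) / Lbar * S bψ.1 * ip p (ℓt bψ.1)
            - (1 - Real.exp (-η * Lbar)) / Lbar * S bψ.1 * ip (pushf bψ.2 p) (ℓt bψ.1)) := by
  have hb {bψ} (h : bψ ∈ ℐ) : bψ.1 ∈ Bs ∪ Be := by
    subst hℐ
    grind
  exact stmt3_general ℐ hw hη.le hL hp (fun bψ _ => pushf_mem_stdSimplex bψ.2 hp) fun bψ h a =>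
    ⟨mul_nonneg (hS _ (hb h)) (hℓt _ (hb h) a).1, (hℓt _ (hb h) a).2⟩
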